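/- For every vertex u of the Shrikhande graph, the subgraph induced on the set of neighbours of u is isomorphic to the cycle graph C₆. -/

import Mathlib

/-- The cycle graph on vertex set `ZMod n`: `i` and `j` are adjacent iff `i - j = ±1`. -/
def cycle (n : ℕ) : SimpleGraph (ZMod n) :=
  SimpleGraph.fromRel (fun i j => i - j = 1)

/-- The adjacency relation of the Shrikhande graph: distinct `v, w : ZMod 4 × ZMod 4` are
adjacent iff `v - w ∈ {(1,0), (3,0), (0,1), (0,3), (1,1), (3,3)}`. -/
def shrikhandeRel (v w : ZMod 4 × ZMod 4) : Prop :=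
  v ≠ w ∧ v - w ∈ ({(1, 0), (3, 0), (0, 1), (0, 3), (1, 1), (3, 3)} : Finset (ZMod 4 × ZMod 4))

instance : DecidableRel shrikhandeRel := fun v w => by unfold shrikhandeRel; infer_instance

/-- The Shrikhande graph on `ZMod 4 × ZMod 4`. -/
def shrikhande : SimpleGraph (ZMod 4 × ZMod 4) where
  Adj := shrikhandeRel
  symm := ⟨fun v w h => (by decide : ∀ a b, shrikhandeRel a b → shrikhandeRel b a) v w h⟩
  loopless := ⟨fun v h => (by decide : ∀ a, ¬shrikhandeRel a a) v h⟩

instance : DecidableRel shrikhande.Adj := fun v w =>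
  inferInstanceAs (Decidable (shrikhandeRel v w))

theorem shrikhande_adj_add_left_iff (u v w : ZMod 4 × ZMod 4) :
    shrikhande.Adj (u + v) (u + w) ↔ shrikhande.Adj v w := by
  change shrikhandeRel (u + v) (u + w) ↔ shrikhandeRel v w
  simp only [shrikhandeRel, ne_eq, add_right_inj, add_sub_add_left_eq_sub]

/-- Translation by `u`, as an automorphism of the Shrikhande graph. -/
def shrikhandeTranslate (u : ZMod 4 × ZMod 4) : shrikhande ≃g shrikhande where
  toEquiv := Equiv.addLeft u
  map_rel_iff' := shrikhande_adj_add_left_iff u _ _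

theorem image_shrikhandeTranslate_neighborSet_zero (u : ZMod 4 × ZMod 4) :
    shrikhandeTranslate u '' shrikhande.neighborSet 0 = shrikhande.neighborSet u := by
  have translate_zero : shrikhandeTranslate u 0 = u := add_zero u
  rw [(shrikhandeTranslate u).image_neighborSet, translate_zero]

/-- The neighbours of `0` in the Shrikhande graph in cyclic order: the orbit of `(1, 0)` under
`(x, y) ↦ (x - y, x)`, an automorphism of order 6. -/
def hexagon : ZMod 6 → ZMod 4 × ZMod 4 :=
  ![(1, 0), (1, 1), (0, 1), (3, 0), (3, 3), (0, 3)]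

theorem hexagon_injective : Function.Injective hexagon := by
  decide

theorem range_hexagon : Set.range hexagon = shrikhande.neighborSet 0 :=
  Set.ext (by decide : ∀ v, (∃ i, hexagon i = v) ↔ shrikhande.Adj 0 v)

instance (n : ℕ) : DecidableRel (cycle n).Adj :=
  inferInstanceAs (DecidableRel (SimpleGraph.fromRel _).Adj)

theorem shrikhande_adj_hexagon_iff :
    ∀ i j, shrikhande.Adj (hexagon i) (hexagon j) ↔ (cycle 6).Adj i j := by
  decide

/-- The neighbours of `u` in cyclic order, as an embedding of `C₆` as an induced subgraph. It is
the translate by `u` of `hexagon`. -/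
def hexagonAround (u : ZMod 4 × ZMod 4) : cycle 6 ↪g shrikhande where
  toFun i := shrikhandeTranslate u (hexagon i)
  inj' := (shrikhandeTranslate u).injective.comp hexagon_injective
  map_rel_iff' := (shrikhandeTranslate u).map_adj_iff.trans (shrikhande_adj_hexagon_iff _ _)

theorem range_hexagonAround (u : ZMod 4 × ZMod 4) :
    Set.range (hexagonAround u) = shrikhande.neighborSet u :=
  calc Set.range (hexagonAround u)
    _ = shrikhandeTranslate u '' Set.range hexagon := Set.range_comp (shrikhandeTranslate u) hexagon
    _ = shrikhandeTranslate u '' shrikhande.neighborSet 0 := by rw [range_hexagon]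
    _ = shrikhande.neighborSet u := image_shrikhandeTranslate_neighborSet_zero u

/-- For every vertex `u` of the Shrikhande graph, the subgraph induced on the neighbours of `u`
is isomorphic to the cycle graph `C₆`. -/
theorem stmt12 (u : ZMod 4 × ZMod 4) :
    Nonempty ((shrikhande.induce (shrikhande.neighborSet u)) ≃g cycle 6) := by
  rw [← range_hexagonAround u]
  exact ⟨(hexagonAround u).isoInduceRange.symm⟩
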